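/- arXiv:2602.16927 — 2 statements merged into one kernel-verified Lean document; each statement's English description precedes it below -/
import Mathlib

section
/- Let k ≥ 3 be a natural number and let ζ = exp(2πi/2^k). With T = !![1, 0; 0, ζ], X = !![0, 1; 1, 0], and H = (√2)⁻¹ • !![1, 1; 1, −1], the catalyst H · T conjugates the matrix X · !![1, 0; 0, ζ²] to the diagonal matrix !![ζ, 0; 0, −ζ]: (H · T) · (X · !![1, 0; 0, ζ²]) · (H · T)ᴴ = !![ζ, 0; 0, −ζ], where (·)ᴴ denotes the conjugate transpose. (This is the scalar-generator case of the catalysis lemma: the catalytic image X ∘ (1 ⊕ ζ_{k−1}) of ζ_k is conjugated by the catalyst to ζ_k ⊕ ζ_k*.) -/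
/-!
Conjugation by `T` sends `X * diag(1, ζ²)`, whose off-diagonal entries are `ζ²` and `1`, to `ζ • X`,
because `ζ * conj ζ = 1`. The Hadamard matrix then diagonalizes `X` to `diag(1, -1)`. Both facts use
only `|ζ| = 1`, so `catalysis_of_unimodular` checks the identity entrywise for any unimodular `ζ`.
-/

open Complex Matrix

/-- The scalar `s` stands for `1 / √2` and `w` for `conj ζ`. -/
theorem catalysis_of_unimodular (s ζ w : ℂ) (hs : s * s = 1 / 2) (hs' : star s = s)
    (hw : star ζ = w) (hζ : ζ * w = 1) :
    ((s • !![1, 1; 1, -1] : Matrix (Fin 2) (Fin 2) ℂ) * !![1, 0; 0, ζ]) *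
      (!![0, 1; 1, 0] * !![1, 0; 0, ζ ^ 2]) *
      ((s • !![1, 1; 1, -1] : Matrix (Fin 2) (Fin 2) ℂ) * !![1, 0; 0, ζ])ᴴ =
      !![ζ, 0; 0, -ζ] := by
  have hs'' : (starRingEnd ℂ) s = s := hs'
  have hw' : (starRingEnd ℂ) ζ = w := hw
  ext i j
  fin_cases i <;> fin_cases j <;>
    simp [Matrix.mul_apply, Fin.sum_univ_two, hs'', hw'] <;>
    grind

theorem catalysis_scalar_case (k : ℕ) (hk : 3 ≤ k) :
    let ζ : ℂ := Complex.exp (2 * Real.pi * I / 2 ^ k)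
    let T : Matrix (Fin 2) (Fin 2) ℂ := !![1, 0; 0, ζ]
    let X : Matrix (Fin 2) (Fin 2) ℂ := !![0, 1; 1, 0]
    let H : Matrix (Fin 2) (Fin 2) ℂ := ((Real.sqrt 2 : ℂ))⁻¹ • !![1, 1; 1, -1]
    (H * T) * (X * !![1, 0; 0, ζ ^ 2]) * (H * T)ᴴ = !![ζ, 0; 0, -ζ] := by
  intro ζ T X H
  have hsq : ((Real.sqrt 2 : ℂ)) * (Real.sqrt 2 : ℂ) = 2 := by
    rw [← Complex.ofReal_mul, Real.mul_self_sqrt (by norm_num)]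
    norm_num
  have hnorm : ‖ζ‖ = 1 := by
    have h : ζ = Complex.exp (((2 * Real.pi / 2 ^ k : ℝ) : ℂ) * I) := by
      simp only [ζ]
      congr 1
      push_cast
      ring
    rw [h, Complex.norm_exp_ofReal_mul_I]
  refine catalysis_of_unimodular _ ζ (star ζ) ?_ ?_ rfl ?_
  · rw [← mul_inv, hsq, one_div]
  · simp
  · change ζ * (starRingEnd ℂ) ζ = 1
    rw [Complex.mul_conj, Complex.normSq_eq_norm_sq, hnorm]
    simp
end

section
/- Let m, n ≥ 1 be natural numbers and define π : Fin (m·n) → Fin (m·n) by π(x) = n·x mod (m·n − 1) if x ≠ m·n − 1, and π(m·n − 1) = m·n − 1. Then (i) π is a bijection of Fin (m·n), and (ii) π realizes the lexicographic reindexing taking m×n order to n×m order: for all i < m and j < n, π(j·m + i) = i·n + j. -/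
/-!
Since `m * n ≡ 1` modulo `m * n - 1`, multiplying `j * m + i` by `n` gives `i * n + j` modulo
`m * n - 1`; this is the reindexing formula (`transposePerm_val_lex`). Every `y < m * n` has the form
`i * n + j` with `i = y / n` and `j = y % n`, so the formula makes the map surjective, hence bijective
because `Fin (m * n)` is finite.
-/

/-- The reindexing map `mn → mn` sending `x ↦ n·x mod (mn − 1)` for `x ≠ mn − 1`,
and fixing `mn − 1`. -/
def transposePerm (m n : ℕ) (x : Fin (m * n)) : Fin (m * n) :=
  if (x : ℕ) = m * n - 1 then x
  else ⟨n * (x : ℕ) % (m * n - 1), by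
    have hx := x.isLt
    rcases Nat.eq_zero_or_pos (m * n - 1) with h0 | h0
    · have hx0 : (x : ℕ) = 0 := by omega
      rw [hx0, h0, Nat.mul_zero, Nat.zero_mod]
      exact Nat.lt_of_le_of_lt (Nat.zero_le _) hx
    · exact lt_of_lt_of_le (Nat.mod_lt _ h0) (Nat.sub_le _ _)⟩

/-- With `N = m * n - 1`, the identity `n * (j * m + i) = (i * n + j) + N * j` gives the claim modulo
`N`; the corner `i = m - 1`, `j = n - 1` is the only one where either index equals `N`. -/
theorem transposePerm_val_lex (m n i j : ℕ) (hi : i < m) (hj : j < n) (h : j * m + i < m * n) :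
    (transposePerm m n ⟨j * m + i, h⟩ : ℕ) = i * n + j := by
  obtain ⟨a, rfl⟩ := Nat.exists_eq_add_of_lt hi
  obtain ⟨b, rfl⟩ := Nat.exists_eq_add_of_lt hj
  -- The distances of the two indices to `N` are `a + b * m` and `b + a * n`.
  have h1 : (i + a + 1) * (j + b + 1) - 1 = j * (i + a + 1) + i + (a + b * (i + a + 1)) :=
    Nat.sub_eq_of_eq_add (by ring)
  have h2 : (i + a + 1) * (j + b + 1) - 1 = i * (j + b + 1) + j + (b + a * (j + b + 1)) :=
    Nat.sub_eq_of_eq_add (by ring)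
  unfold transposePerm
  split_ifs with hx
  · simp only at hx ⊢
    have hz : a + b * (i + a + 1) = 0 := by omega
    have ha : a = 0 := by omega
    have hb : b = 0 := by
      have : b * (i + a + 1) = 0 := by omega
      simpa using this
    subst ha hb
    ring
  · simp only at hx ⊢
    have hpos : 0 < b + a * (j + b + 1) := by
      rcases Nat.eq_zero_or_pos b with rfl | hb
      · have ha : a ≠ 0 := by
          rintro rfl
          exact hx (by rw [h1]; ring)
        positivity
      · omega
    have key : (j + b + 1) * (j * (i + a + 1) + i)
        = i * (j + b + 1) + j + ((i + a + 1) * (j + b + 1) - 1) * j := by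
      rw [h1]; ring
    rw [key, Nat.add_mul_mod_self_left, Nat.mod_eq_of_lt (by omega)]

theorem transposePerm_bijective_and_lex (m n : ℕ) (hm : 1 ≤ m) (hn : 1 ≤ n) :
    Function.Bijective (transposePerm m n) ∧
    ∀ (i j : ℕ) (hi : i < m) (hj : j < n),
      (transposePerm m n ⟨j * m + i, by
        calc j * m + i < j * m + m := by omega
          _ = (j + 1) * m := by ring
          _ ≤ n * m := Nat.mul_le_mul_right m hj
          _ = m * n := Nat.mul_comm n m⟩ : ℕ) = i * n + j := by
  refine ⟨Function.Surjective.bijective_of_finite fun y => ?_,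
    fun i j hi hj => transposePerm_val_lex m n i j hi hj _⟩
  have hi : (y : ℕ) / n < m := Nat.div_lt_of_lt_mul (y.isLt.trans_eq (Nat.mul_comm m n))
  have hj : (y : ℕ) % n < n := Nat.mod_lt _ hn
  have h : (y : ℕ) % n * m + (y : ℕ) / n < m * n := by nlinarith
  refine ⟨⟨_, h⟩, Fin.ext ?_⟩
  rw [transposePerm_val_lex m n _ _ hi hj h]
  exact Nat.div_add_mod' _ _
end
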